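/- arXiv:2408.03215 — 2 statements merged into one kernel-verified Lean document; each statement's English description precedes it below -/
import Mathlib

section
/- The coordinatewise stochastic binarization with step size α = ‖m‖_∞ satisfies the compression-variance bound (Assumption 5) with q² = d − 1: E‖S(m) − m‖₂² = d·‖m‖_∞² − ‖m‖₂² ≤ (d − 1)·‖m‖₂². -/
open MeasureTheory

/-!
Adding uniform noise before taking the floor is unbiased: `⌊p + u⌋` exceeds `⌊p⌋` by one exactly for
`u ∈ [1 - fract p, 1)`, an event of probability `fract p`, so its mean is `p`. Hence each coordinate
`s` of the binarization has mean `m i`, while `s ^ 2 = α ^ 2`, and its mean squared error is the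
variance `α ^ 2 - (m i) ^ 2`. Summing over the coordinates uses only linearity of the integral, so
the joint law of the noise is irrelevant. The final bound amounts to `‖m‖_∞ ≤ ‖m‖₂`.
-/

open ProbabilityTheory Set

lemma floor_add_eq_floor_add_indicator {R : Type*} [Ring R] [LinearOrder R] [IsStrictOrderedRing R]
    [FloorRing R] (p : R) {u : R} (hu : u ∈ Ico 0 1) :
    ⌊p + u⌋ = ⌊p⌋ + (Ico (1 - Int.fract p) 1).indicator 1 u := by
  obtain ⟨hu0, hu1⟩ := hu
  conv_lhs => rw [← Int.floor_add_fract p, add_assoc, Int.floor_intCast_add]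
  congr 1
  by_cases h : 1 - Int.fract p ≤ u
  · have hmem : u ∈ Ico (1 - Int.fract p) 1 := ⟨h, hu1⟩
    rw [indicator_of_mem hmem, Pi.one_apply, Int.floor_eq_iff, Int.cast_one]
    exact ⟨sub_le_iff_le_add'.mp h, add_lt_add (Int.fract_lt_one p) hu1⟩
  · rw [indicator_of_notMem fun hmem => h hmem.1, Int.floor_eq_zero_iff]
    exact ⟨add_nonneg (Int.fract_nonneg p) hu0, lt_sub_iff_add_lt'.mp (not_le.mp h)⟩

lemma floor_add_eqOn_indicator (p : ℝ) :
    EqOn (fun u : ℝ => (⌊p + u⌋ : ℝ))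
      (fun u => ⌊p⌋ + (Ico (1 - Int.fract p) 1).indicator 1 u) (Ico 0 1) := by
  intro u hu
  simp only [floor_add_eq_floor_add_indicator p hu, indicator_apply]
  split_ifs <;> simp

lemma integrableOn_floor_add (p : ℝ) :
    IntegrableOn (fun u : ℝ => (⌊p + u⌋ : ℝ)) (Ico 0 1) :=
  (integrableOn_congr_fun (floor_add_eqOn_indicator p) measurableSet_Ico).mpr <|
    (integrable_const _).add ((integrable_const 1).indicator measurableSet_Ico)

lemma setIntegral_floor_add (p : ℝ) : ∫ u in Ico (0 : ℝ) 1, (⌊p + u⌋ : ℝ) = p := by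
  have hsub : Ico (1 - Int.fract p) 1 ⊆ Ico 0 1 :=
    Ico_subset_Ico_left (sub_nonneg.mpr (Int.fract_lt_one p).le)
  have hprob : ∫ u in Ico (0 : ℝ) 1, (Ico (1 - Int.fract p) 1).indicator 1 u = Int.fract p := by
    rw [integral_indicator_one measurableSet_Ico, measureReal_restrict_apply measurableSet_Ico,
      inter_eq_left.mpr hsub, Real.volume_real_Ico, sub_sub_cancel,
      max_eq_left (Int.fract_nonneg p)]
  rw [setIntegral_congr_fun measurableSet_Ico (floor_add_eqOn_indicator p),
    integral_add (integrable_const _) ((integrable_const 1).indicator measurableSet_Ico), hprob]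
  simp [Int.floor_add_fract]

/-- Stochastic binarization of `x` with step size `α` and noise `u`: one coordinate of `S(m)`, with
`x = m i` and `u = ζ i`. For `|x| ≤ α` and `u ∈ [0, 1)` its value is `α` or `-α`. -/
noncomputable def binarize (α x u : ℝ) : ℝ :=
  α * (2 * (⌊(α + x) / (2 * α) + u⌋ : ℝ) - 1)

lemma binarize_sq {α x u : ℝ} (hα : 0 < α) (hx : |x| ≤ α) (hu : u ∈ Ico 0 1) :
    binarize α x u ^ 2 = α ^ 2 := by
  obtain ⟨hx_lower, hx_upper⟩ := abs_le.mp hx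
  obtain ⟨hu0, hu1⟩ := hu
  have hp0 : 0 ≤ (α + x) / (2 * α) := div_nonneg (by linarith) (by linarith)
  have hp1 : (α + x) / (2 * α) ≤ 1 := (div_le_one (by linarith)).mpr (by linarith)
  have hfloor0 : 0 ≤ ⌊(α + x) / (2 * α) + u⌋ := Int.floor_nonneg.mpr (by linarith)
  have hfloor2 : ⌊(α + x) / (2 * α) + u⌋ < 2 := Int.floor_lt.mpr (by push_cast; linarith)
  unfold binarize
  generalize ⌊(α + x) / (2 * α) + u⌋ = n at *
  interval_cases n <;> norm_num

lemma integrableOn_binarize (α x : ℝ) : IntegrableOn (binarize α x) (Ico 0 1) :=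
  (((integrableOn_floor_add _).const_mul 2).sub (integrable_const 1)).const_mul α

lemma setIntegral_binarize {α : ℝ} (hα : α ≠ 0) (x : ℝ) :
    ∫ u in Ico (0 : ℝ) 1, binarize α x u = x := by
  unfold binarize
  rw [integral_const_mul,
    integral_sub ((integrableOn_floor_add _).const_mul 2) (integrable_const 1),
    integral_const_mul, setIntegral_floor_add]
  simp only [integral_const, measureReal_restrict_apply_univ, Real.volume_real_Ico,
    sub_zero, max_eq_left zero_le_one, one_smul]
  field_simp
  ring

lemma binarize_sub_sq_eqOn {α x : ℝ} (hα : 0 < α) (hx : |x| ≤ α) :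
    EqOn (fun u => (binarize α x u - x) ^ 2)
      (fun u => (α ^ 2 + x ^ 2) - 2 * x * binarize α x u) (Ico 0 1) := by
  intro u hu
  linear_combination binarize_sq hα hx hu

lemma integrableOn_binarize_sub_sq {α x : ℝ} (hα : 0 < α) (hx : |x| ≤ α) :
    IntegrableOn (fun u => (binarize α x u - x) ^ 2) (Ico 0 1) :=
  (integrableOn_congr_fun (binarize_sub_sq_eqOn hα hx) measurableSet_Ico).mpr <|
    (integrable_const _).sub ((integrableOn_binarize α x).const_mul _)

lemma setIntegral_binarize_sub_sq {α x : ℝ} (hα : 0 < α) (hx : |x| ≤ α) :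
    ∫ u in Ico (0 : ℝ) 1, (binarize α x u - x) ^ 2 = α ^ 2 - x ^ 2 := by
  rw [setIntegral_congr_fun measurableSet_Ico (binarize_sub_sq_eqOn hα hx),
    integral_sub (integrable_const _) ((integrableOn_binarize α x).const_mul _),
    integral_const_mul, setIntegral_binarize hα.ne']
  simp only [integral_const, measureReal_restrict_apply_univ, Real.volume_real_Ico,
    sub_zero, max_eq_left zero_le_one, one_smul]
  ring

lemma integral_norm_sq_eq_sum {Ω ι : Type*} [Fintype ι] {β : ι → Type*}
    [∀ i, SeminormedAddCommGroup (β i)] {mΩ : MeasurableSpace Ω} {P : Measure Ω}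
    {X : Ω → PiLp 2 β} (hX : ∀ i, Integrable (fun ω => ‖X ω i‖ ^ 2) P) :
    ∫ ω, ‖X ω‖ ^ 2 ∂P = ∑ i, ∫ ω, ‖X ω i‖ ^ 2 ∂P := by
  simp only [PiLp.norm_sq_eq_of_L2]
  exact integral_finsetSum _ fun i _ => hX i

theorem stochastic_binarization_assumption5_general {Ω ι : Type*} [Fintype ι]
    {mΩ : MeasurableSpace Ω} {P : Measure Ω} (m : EuclideanSpace ℝ ι) {α : ℝ} (hα : 0 < α)
    (hm : ∀ i, |m i| ≤ α) {ζ : ι → Ω → ℝ}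
    (hζ : ∀ i, HasLaw (ζ i) (volume.restrict (Ico (0 : ℝ) 1)) P) :
    (∫ ω, ‖WithLp.toLp 2 (fun i => binarize α (m i) (ζ i ω)) - m‖ ^ 2 ∂P =
      Fintype.card ι * α ^ 2 - ‖m‖ ^ 2) ∧
    (α ≤ ‖m‖ → ∫ ω, ‖WithLp.toLp 2 (fun i => binarize α (m i) (ζ i ω)) - m‖ ^ 2 ∂P ≤
      ((Fintype.card ι : ℝ) - 1) * ‖m‖ ^ 2) := by
  have hint (i) : Integrable (fun u => (binarize α (m i) u - m i) ^ 2) (P.map (ζ i)) :=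
    (hζ i).map_eq ▸ integrableOn_binarize_sub_sq hα (hm i)
  have hcoord (i) : ∫ ω, (binarize α (m i) (ζ i ω) - m i) ^ 2 ∂P = α ^ 2 - m i ^ 2 :=
    ((hζ i).integral_comp (integrableOn_binarize_sub_sq hα (hm i)).aestronglyMeasurable).trans
      (setIntegral_binarize_sub_sq hα (hm i))
  have heq : ∫ ω, ‖WithLp.toLp 2 (fun i => binarize α (m i) (ζ i ω)) - m‖ ^ 2 ∂P =
      Fintype.card ι * α ^ 2 - ‖m‖ ^ 2 := by
    rw [integral_norm_sq_eq_sum fun i => by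
      simpa [Function.comp_def] using (hint i).comp_aemeasurable (hζ i).aemeasurable]
    simp [hcoord, EuclideanSpace.real_norm_sq_eq]
  refine ⟨heq, fun hαm => heq.trans_le ?_⟩
  calc (Fintype.card ι : ℝ) * α ^ 2 - ‖m‖ ^ 2
      ≤ Fintype.card ι * ‖m‖ ^ 2 - ‖m‖ ^ 2 := by gcongr
    _ = ((Fintype.card ι : ℝ) - 1) * ‖m‖ ^ 2 := by ring

/-- **Compression-variance bound for coordinatewise stochastic binarization** with step size
`α = ‖m‖_∞`: `E‖S(m) − m‖₂² = d ‖m‖_∞² − ‖m‖₂² ≤ (d − 1) ‖m‖₂²`, i.e. Assumption 5 holds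
with `q² = d − 1`. -/
theorem stochastic_binarization_assumption5
    {Ω : Type*} {m0 : MeasurableSpace Ω} (P : Measure Ω) [IsProbabilityMeasure P]
    (d : ℕ) (hd : 1 ≤ d)
    (m : EuclideanSpace ℝ (Fin d)) (hm : m ≠ 0)
    (α : ℝ) (hα : IsGreatest (Set.range fun i => |m i|) α)
    (ζ : Fin d → Ω → ℝ) (hζmeas : ∀ i, Measurable (ζ i))
    (hζ : ∀ i, Measure.map (ζ i) P = volume.restrict (Set.Ico (0 : ℝ) 1)) :
    (∫ ω, ‖((EuclideanSpace.equiv (Fin d) ℝ).symm fun i =>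
        α * (2 * (⌊(α + m i) / (2 * α) + ζ i ω⌋ : ℝ) - 1)) - m‖ ^ 2 ∂P =
      d * α ^ 2 - ‖m‖ ^ 2) ∧
    ∫ ω, ‖((EuclideanSpace.equiv (Fin d) ℝ).symm fun i =>
        α * (2 * (⌊(α + m i) / (2 * α) + ζ i ω⌋ : ℝ) - 1)) - m‖ ^ 2 ∂P ≤
      ((d : ℝ) - 1) * ‖m‖ ^ 2 := by
  have hle (i) : |m i| ≤ α := hα.2 (mem_range_self i)
  obtain ⟨j, rfl : |m j| = α⟩ := hα.1
  have hpos : 0 < |m j| := by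
    contrapose! hm
    ext i
    exact abs_nonpos_iff.mp ((hle i).trans hm)
  obtain ⟨heq, hbound⟩ := stochastic_binarization_assumption5_general m hpos hle
    fun i => ⟨(hζmeas i).aemeasurable, hζ i⟩
  rw [Fintype.card_fin] at heq hbound
  exact ⟨heq, hbound (PiLp.norm_apply_le m j)⟩
end

section
/- Diminishing-stepsize recursion lemma: if a nonnegative sequence (Δ_t)_{t ≥ 1} satisfies Δ_{t+1} ≤ (1 − η_t μ)·Δ_t + η_t²·B for all t ≥ 1 with η_t = β/(t + γ), then for all t ≥ 1, Δ_t ≤ v/(t + γ), where v = max{β²B/(βμ − 1), (γ + 1)·Δ_1}. -/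
/-!
The bound `x ≤ v / s` is propagated from `s = t + γ` to `s + 1`. Once `β² B ≤ v (β μ - 1)`, the
contraction `-β μ v / s²` pays for the noise `β² B / s²` and leaves a surplus of `v / s²`, so the
new value is at most `v / s - v / s² = v (s - 1) / s²`. This is at most `v / (s + 1)`, because
`(s - 1) (s + 1) ≤ s²`. The two entries of the maximum defining `v` are what the propagation and
the initial time require.
-/

section Recursion

variable {𝕜 : Type*} [Field 𝕜] [LinearOrder 𝕜] [IsStrictOrderedRing 𝕜]
  {μ B γ β v : 𝕜} {Δ : ℕ → 𝕜} {t₀ : ℕ}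

lemma sub_one_div_sq_le_one_div_add_one {s : 𝕜} (hs : 0 < s) :
    (s - 1) / s ^ 2 ≤ 1 / (s + 1) := by
  rw [div_le_div_iff₀ (by positivity) (by positivity)]
  linarith [sq_nonneg s]

lemma contraction_add_noise_le_div_add_one {s x : 𝕜} (hs : 0 < s) (hβμ : β * μ ≤ s)
    (hv : 0 ≤ v) (hB : β ^ 2 * B ≤ v * (β * μ - 1)) (hx : x ≤ v / s) :
    (1 - β / s * μ) * x + (β / s) ^ 2 * B ≤ v / (s + 1) := by
  have contraction_nonneg : 0 ≤ 1 - β / s * μ := by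
    rwa [sub_nonneg, div_mul_eq_mul_div, div_le_one hs]
  have noise_le : (β / s) ^ 2 * B ≤ v * (β * μ - 1) / s ^ 2 := by
    rw [div_pow, div_mul_eq_mul_div]
    gcongr
  calc (1 - β / s * μ) * x + (β / s) ^ 2 * B
      ≤ (1 - β / s * μ) * (v / s) + v * (β * μ - 1) / s ^ 2 := by gcongr
    _ = v * ((s - 1) / s ^ 2) := by field_simp; ring
    _ ≤ v * (1 / (s + 1)) :=
      mul_le_mul_of_nonneg_left (sub_one_div_sq_le_one_div_add_one hs) hv
    _ = v / (s + 1) := mul_one_div v (s + 1)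

lemma le_div_add_of_diminishing_stepsize (hpos : 0 < t₀ + γ) (hβμ : β * μ ≤ t₀ + γ)
    (hv : 0 ≤ v) (hB : β ^ 2 * B ≤ v * (β * μ - 1)) (hinit : Δ t₀ ≤ v / (t₀ + γ))
    (hrec : ∀ t, t₀ ≤ t → Δ (t + 1) ≤ (1 - β / (t + γ) * μ) * Δ t + (β / (t + γ)) ^ 2 * B)
    {t : ℕ} (ht : t₀ ≤ t) : Δ t ≤ v / (t + γ) := by
  induction t, ht using Nat.le_induction with
  | base => exact hinit
  | succ t ht ih =>
    have start_le : t₀ + γ ≤ t + γ := by gcongr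
    calc Δ (t + 1) ≤ (1 - β / (t + γ) * μ) * Δ t + (β / (t + γ)) ^ 2 * B := hrec t ht
      _ ≤ v / (t + γ + 1) :=
        contraction_add_noise_le_div_add_one (hpos.trans_le start_le) (hβμ.trans start_le) hv hB ih
      _ = v / ((t + 1 : ℕ) + γ) := by rw [Nat.cast_succ, add_right_comm]

theorem diminishing_stepsize_recursion_general (hB : 0 ≤ B) (hβ : 1 < β * μ)
    (hβμ : β * μ ≤ t₀ + γ)
    (hrec : ∀ t, t₀ ≤ t → Δ (t + 1) ≤ (1 - β / (t + γ) * μ) * Δ t + (β / (t + γ)) ^ 2 * B)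
    {t : ℕ} (ht : t₀ ≤ t) :
    Δ t ≤ max (β ^ 2 * B / (β * μ - 1)) ((γ + t₀) * Δ t₀) / (t + γ) := by
  have gap_pos : 0 < β * μ - 1 := sub_pos.mpr hβ
  have start_pos : 0 < t₀ + γ := (zero_lt_one.trans hβ).trans_le hβμ
  refine le_div_add_of_diminishing_stepsize start_pos hβμ ?_ ?_ ?_ hrec ht
  · exact le_max_of_le_left (by positivity)
  · exact (div_le_iff₀ gap_pos).mp (le_max_left _ _)
  · rw [le_div_iff₀' start_pos, add_comm (t₀ : 𝕜) γ]
    exact le_max_right _ _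

end Recursion

/-- **Diminishing-stepsize recursion lemma**: if a nonnegative sequence `Δ` satisfies
`Δ (t+1) ≤ (1 − η t μ) Δ t + (η t)² B` for all `t ≥ 1`, where `η t = β / (t + γ)` with
`β > 1/μ`, `γ > 0` and `β μ ≤ 1 + γ`, then `Δ t ≤ v / (t + γ)` for all `t ≥ 1`, where
`v = max (β² B / (β μ − 1)) ((γ + 1) Δ 1)`. -/
theorem diminishing_stepsize_recursion
    (μ B γ β : ℝ) (hμ : 0 < μ) (hB : 0 ≤ B) (hγ : 0 < γ)
    (hβ : 1 / μ < β) (hβμ : β * μ ≤ 1 + γ)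
    (Δ : ℕ → ℝ) (hΔ : ∀ t, 1 ≤ t → 0 ≤ Δ t)
    (hrec : ∀ t : ℕ, 1 ≤ t →
      Δ (t + 1) ≤ (1 - (β / ((t : ℝ) + γ)) * μ) * Δ t + (β / ((t : ℝ) + γ)) ^ 2 * B) :
    ∀ t : ℕ, 1 ≤ t →
      Δ t ≤ max (β ^ 2 * B / (β * μ - 1)) ((γ + 1) * Δ 1) / ((t : ℝ) + γ) := by
  intro t ht
  simpa only [Nat.cast_one] using diminishing_stepsize_recursion_general hB
    ((div_lt_iff₀ hμ).mp hβ) (by rwa [Nat.cast_one]) hrec ht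
end
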